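/- Let γ > 1, B, S > 0 and ε > 0 be real constants. Let ρ : [0, 𝔱_c) → ℝ satisfy ϱ_c < ρ(t) ≤ ϱ_m and 𝔱(ρ(t)) = t for all t ∈ [0, 𝔱_c), and suppose ρ is differentiable at some t₀ with 0 ≤ t₀ ≤ 𝔱_c − ε/2 (derivative taken within [0, 𝔱_c)). Then the function g := 1/ρ is differentiable at t₀ with derivative g'(t₀) = −ρ'(t₀)/ρ(t₀)², and 0 < g'(t₀) ≤ g(t₀)/ε. -/

import Mathlib

/-!
On the branch `ϱ_c < ρ` the function `𝔱` is strictly decreasing, and Euler's identity for the two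
monomials of `𝔱` gives `-ρ 𝔱'(ρ) = 2 ((γ - 1) S ρ ^ (γ + 1) - 𝔱(ρ))`. Since
`𝔱_c = (γ - 1) S ϱ_c ^ (γ + 1)`, the right-hand side exceeds `2 (𝔱_c - 𝔱(ρ))`. Differentiating
`𝔱(ρ(t)) = t` turns this into `2 (𝔱_c - t) g'(t) < g(t)` for `g = 1 / ρ`.
-/

open Set

/-- The squared momentum `𝔱(r)` at density `r`, whose inverse on the branch above the critical
density is the density as a function of squared momentum. -/
noncomputable def sqMomentum (γ B S r : ℝ) : ℝ :=
  2 * r ^ 2 * (B - r ^ (γ - 1) * S)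

/-- The critical density `ϱ_c`, the positive zero of the derivative of `sqMomentum γ B S`; it bounds
from below the densities under consideration. -/
noncomputable def criticalDensity (γ B S : ℝ) : ℝ :=
  (2 * B / ((γ + 1) * S)) ^ (1 / (γ - 1))

/-- The squared critical momentum `𝔱_c`, the value of `sqMomentum γ B S` at the critical density,
written out as an explicit function of the parameters. -/
noncomputable def criticalSqMomentum (γ B S : ℝ) : ℝ :=
  (γ - 1) * (2 * B / (γ + 1)) ^ ((γ + 1) / (γ - 1)) * S ^ (-2 / (γ - 1))

lemma hasDerivAt_sqMomentum (γ B S : ℝ) {r : ℝ} (hr : r ≠ 0) :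
    HasDerivAt (sqMomentum γ B S) (2 * r * (2 * B - (γ + 1) * S * r ^ (γ - 1))) r := by
  have hsq : HasDerivAt (fun x : ℝ => 2 * x ^ 2) (2 * (2 * r)) r := by
    simpa using (hasDerivAt_pow 2 r).const_mul 2
  have hfactor : HasDerivAt (fun x : ℝ => B - x ^ (γ - 1) * S)
      (-((γ - 1) * r ^ (γ - 1 - 1) * S)) r :=
    ((Real.hasDerivAt_rpow_const (Or.inl hr)).mul_const S).const_sub B
  refine (hsq.fun_mul hfactor).congr_deriv ?_
  rw [Real.rpow_sub_one hr (γ - 1)]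
  field_simp
  ring

lemma mul_deriv_sqMomentum (γ B S : ℝ) {r : ℝ} (hr : 0 < r) :
    r * deriv (sqMomentum γ B S) r =
      2 * (sqMomentum γ B S r - (γ - 1) * S * r ^ (γ + 1)) := by
  have hpow : r ^ (γ + 1) = r ^ 2 * r ^ (γ - 1) := by
    rw [← Real.rpow_natCast, ← Real.rpow_add hr]
    congr 1
    push_cast
    ring
  rw [(hasDerivAt_sqMomentum γ B S hr.ne').deriv, sqMomentum, hpow]
  ring

section Critical

variable {γ B S : ℝ}

lemma criticalDensity_nonneg (hγ : -1 ≤ γ) (hB : 0 ≤ B) (hS : 0 ≤ S) :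
    0 ≤ criticalDensity γ B S := by
  have : 0 ≤ γ + 1 := by linarith
  unfold criticalDensity
  positivity

lemma criticalDensity_rpow_sub_one (hγ : 1 < γ) (hB : 0 ≤ B) (hS : 0 ≤ S) :
    criticalDensity γ B S ^ (γ - 1) = 2 * B / ((γ + 1) * S) := by
  rw [criticalDensity, one_div, Real.rpow_inv_rpow (by positivity) (by linarith)]

lemma criticalSqMomentum_eq (hγ : 1 < γ) (hB : 0 ≤ B) (hS : 0 < S) :
    criticalSqMomentum γ B S = (γ - 1) * S * criticalDensity γ B S ^ (γ + 1) := by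
  have hγ' : γ - 1 ≠ 0 := by linarith
  have hdensity : criticalDensity γ B S ^ (γ + 1) =
      (2 * B / (γ + 1)) ^ ((γ + 1) / (γ - 1)) / S ^ ((γ + 1) / (γ - 1)) := by
    rw [criticalDensity, ← Real.rpow_mul (by positivity), one_div_mul_eq_div, ← div_div,
      Real.div_rpow (by positivity) hS.le]
  have hS_pow : S ^ (-2 / (γ - 1)) = S / S ^ ((γ + 1) / (γ - 1)) := by
    rw [show -2 / (γ - 1) = 1 - (γ + 1) / (γ - 1) by field_simp; ring, Real.rpow_sub hS,
      Real.rpow_one]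
  rw [criticalSqMomentum, hdensity, hS_pow]
  ring

lemma deriv_sqMomentum_neg (hγ : 1 < γ) (hB : 0 ≤ B) (hS : 0 < S) {r : ℝ}
    (hr : criticalDensity γ B S < r) : deriv (sqMomentum γ B S) r < 0 := by
  have hc : 0 ≤ criticalDensity γ B S := criticalDensity_nonneg (by linarith) hB hS.le
  have hpow : 2 * B / ((γ + 1) * S) < r ^ (γ - 1) := by
    rw [← criticalDensity_rpow_sub_one hγ hB hS.le]
    exact Real.rpow_lt_rpow hc hr (by linarith)
  rw [div_lt_iff₀' (by positivity)] at hpow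
  have hr₀ : 0 < r := hc.trans_lt hr
  rw [(hasDerivAt_sqMomentum γ B S hr₀.ne').deriv]
  exact mul_neg_of_pos_of_neg (by positivity) (by linarith)

lemma two_mul_criticalSqMomentum_sub_lt (hγ : 1 < γ) (hB : 0 ≤ B) (hS : 0 < S) {r : ℝ}
    (hr : criticalDensity γ B S < r) :
    2 * (criticalSqMomentum γ B S - sqMomentum γ B S r) < -(r * deriv (sqMomentum γ B S) r) := by
  have hc : 0 ≤ criticalDensity γ B S := criticalDensity_nonneg (by linarith) hB hS.le
  have hcrit : criticalSqMomentum γ B S < (γ - 1) * S * r ^ (γ + 1) := by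
    rw [criticalSqMomentum_eq hγ hB hS]
    have : 0 < γ - 1 := by linarith
    gcongr
  rw [mul_deriv_sqMomentum γ B S (hc.trans_lt hr)]
  linarith

end Critical

lemma mul_eq_one_of_hasDerivAt_of_leftInvOn {𝕜 : Type*} [NontriviallyNormedField 𝕜] {f g : 𝕜 → 𝕜}
    {f' g' a : 𝕜} {s : Set 𝕜} (hf : HasDerivAt f f' (g a)) (hg : HasDerivWithinAt g g' s a)
    (hs : UniqueDiffWithinAt 𝕜 s a) (ha : a ∈ s) (hfg : LeftInvOn f g s) : f' * g' = 1 :=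
  hs.eq_deriv s (hf.comp_hasDerivWithinAt a hg) ((hasDerivWithinAt_id a s).congr hfg (hfg ha))

theorem stmt_7_general {γ B S : ℝ} (hγ : 1 < γ) (hB : 0 ≤ B) (hS : 0 < S) {ρ : ℝ → ℝ}
    {s : Set ℝ} {t₀ ρ' : ℝ} (hs : UniqueDiffWithinAt ℝ s t₀) (ht₀ : t₀ ∈ s)
    (hcrit : criticalDensity γ B S < ρ t₀) (hrel : LeftInvOn (sqMomentum γ B S) ρ s)
    (hd : HasDerivWithinAt ρ ρ' s t₀) :
    HasDerivWithinAt (fun t => 1 / ρ t) (-ρ' / ρ t₀ ^ 2) s t₀ ∧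
      0 < -ρ' / ρ t₀ ^ 2 ∧
      2 * (criticalSqMomentum γ B S - t₀) * (-ρ' / ρ t₀ ^ 2) < 1 / ρ t₀ := by
  have hρ : 0 < ρ t₀ := (criticalDensity_nonneg (by linarith) hB hS.le).trans_lt hcrit
  have hchain : deriv (sqMomentum γ B S) (ρ t₀) * ρ' = 1 :=
    mul_eq_one_of_hasDerivAt_of_leftInvOn
      (hasDerivAt_sqMomentum γ B S hρ.ne').differentiableAt.hasDerivAt hd hs ht₀ hrel
  have hρ' : ρ' < 0 :=
    neg_of_mul_pos_right (hchain ▸ one_pos) (deriv_sqMomentum_neg hγ hB hS hcrit).le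
  have hpos : 0 < -ρ' / ρ t₀ ^ 2 := div_pos (neg_pos.2 hρ') (by positivity)
  refine ⟨by simpa only [one_div] using hd.fun_inv hρ.ne', hpos, ?_⟩
  calc 2 * (criticalSqMomentum γ B S - t₀) * (-ρ' / ρ t₀ ^ 2)
      = 2 * (criticalSqMomentum γ B S - sqMomentum γ B S (ρ t₀)) * (-ρ' / ρ t₀ ^ 2) := by
        rw [hrel ht₀]
    _ < -(ρ t₀ * deriv (sqMomentum γ B S) (ρ t₀)) * (-ρ' / ρ t₀ ^ 2) :=
        mul_lt_mul_of_pos_right (two_mul_criticalSqMomentum_sub_lt hγ hB hS hcrit) hpos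
    _ = deriv (sqMomentum γ B S) (ρ t₀) * ρ' / ρ t₀ := by field_simp
    _ = 1 / ρ t₀ := by rw [hchain]

/-- Let `γ > 1`, `B, S > 0`, `ε > 0`. Let `ρ : [0, 𝔱_c) → ℝ` take values in `(ϱ_c, ϱ_m]`
and satisfy `𝔱(ρ(t)) = t` on `[0, 𝔱_c)`. If `ρ` has derivative `ρ'` at `t₀` (within
`[0, 𝔱_c)`) with `0 ≤ t₀ ≤ 𝔱_c - ε/2`, then `g = 1/ρ` is differentiable at `t₀` with
derivative `-ρ'/ρ(t₀)²`, and `0 < -ρ'/ρ(t₀)² ≤ g(t₀)/ε`. -/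
theorem stmt_7 (γ B S ε : ℝ) (hγ : 1 < γ) (hB : 0 < B) (hS : 0 < S) (hε : 0 < ε)
    (ρ : ℝ → ℝ)
    (hmem : ∀ t ∈ Set.Ico (0 : ℝ)
        ((γ - 1) * (2 * B / (γ + 1)) ^ ((γ + 1) / (γ - 1)) * S ^ (-2 / (γ - 1))),
      (2 * B / ((γ + 1) * S)) ^ (1 / (γ - 1)) < ρ t ∧ ρ t ≤ (B / S) ^ (1 / (γ - 1)))
    (hrel : ∀ t ∈ Set.Ico (0 : ℝ)
        ((γ - 1) * (2 * B / (γ + 1)) ^ ((γ + 1) / (γ - 1)) * S ^ (-2 / (γ - 1))),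
      2 * (ρ t) ^ 2 * (B - (ρ t) ^ (γ - 1) * S) = t)
    (t₀ ρ' : ℝ) (ht₀ : 0 ≤ t₀)
    (ht₀' : t₀ ≤ (γ - 1) * (2 * B / (γ + 1)) ^ ((γ + 1) / (γ - 1)) * S ^ (-2 / (γ - 1))
      - ε / 2)
    (hd : HasDerivWithinAt ρ ρ'
      (Set.Ico (0 : ℝ)
        ((γ - 1) * (2 * B / (γ + 1)) ^ ((γ + 1) / (γ - 1)) * S ^ (-2 / (γ - 1)))) t₀) :
    HasDerivWithinAt (fun t => 1 / ρ t) (-ρ' / (ρ t₀) ^ 2)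
      (Set.Ico (0 : ℝ)
        ((γ - 1) * (2 * B / (γ + 1)) ^ ((γ + 1) / (γ - 1)) * S ^ (-2 / (γ - 1)))) t₀ ∧
    0 < -ρ' / (ρ t₀) ^ 2 ∧ -ρ' / (ρ t₀) ^ 2 ≤ (1 / ρ t₀) / ε := by
  change t₀ ≤ criticalSqMomentum γ B S - ε / 2 at ht₀'
  have hmem₀ : t₀ ∈ Ico 0 (criticalSqMomentum γ B S) := ⟨ht₀, by linarith⟩
  obtain ⟨hderiv, hpos, hlt⟩ := stmt_7_general hγ hB.le hS (uniqueDiffOn_Ico _ _ _ hmem₀) hmem₀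
    (hmem t₀ hmem₀).1 hrel hd
  have hε_le : ε ≤ 2 * (criticalSqMomentum γ B S - t₀) := by linarith
  exact ⟨hderiv, hpos,
    (le_div_iff₀' hε).2 ((mul_le_mul_of_nonneg_right hε_le hpos.le).trans hlt.le)⟩
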